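/- For every x ∈ ℝ with |x| ≥ 1 one has H(x) ≥ −2/|x| − |x| e^{2−x²/2}, where H(x) := 1 − x e^{−x²/2} ∫_0^x e^{y²/2} dy. -/

import Mathlib

/-!
Write `G x = ∫₀ˣ e^{y²/2} dy`. For `x > 0`, division by `x e^{-x²/2}` turns the claim into
`G x ≤ e^{x²/2} (1/x + 2/x²) + e²`. On `[0, 2]` this holds because `y²/2 ≤ y`, so that
`G x ≤ eˣ - 1 ≤ e²`. On `[2, ∞)` the difference of the two sides is monotone: the derivative of
the right side is `e^{x²/2} (1 + 2/x - 1/x² - 4/x³)`, and `2x² ≥ x + 4` there. Negative `x`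
are reduced to positive ones by the evenness of the left and right sides of the claim.
-/

lemma continuous_exp_sq_half : Continuous fun y : ℝ => Real.exp (y ^ 2 / 2) := by fun_prop

lemma integral_exp_sq_half_le_exp_two {x : ℝ} (h0 : 0 ≤ x) (h2 : x ≤ 2) :
    ∫ y in (0:ℝ)..x, Real.exp (y ^ 2 / 2) ≤ Real.exp 2 := by
  have h : ∫ y in (0:ℝ)..x, Real.exp (y ^ 2 / 2) ≤ ∫ y in (0:ℝ)..x, Real.exp y := by
    apply intervalIntegral.integral_mono_on h0
    · exact continuous_exp_sq_half.intervalIntegrable _ _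
    · exact Real.continuous_exp.intervalIntegrable _ _
    · intro y hy
      apply Real.exp_le_exp.mpr
      nlinarith [hy.1, hy.2]
  rw [integral_exp] at h
  have h' := Real.exp_le_exp.mpr h2
  have := Real.exp_pos 0
  linarith

lemma hasDerivAt_majorant_sub_integral {x : ℝ} (hx : 0 < x) :
    HasDerivAt (fun x : ℝ => Real.exp (x ^ 2 / 2) * (1 / x + 2 / x ^ 2)
        - ∫ y in (0:ℝ)..x, Real.exp (y ^ 2 / 2))
      (Real.exp (x ^ 2 / 2) * ((2 * x ^ 2 - x - 4) / x ^ 3)) x := by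
  have h1 : HasDerivAt (fun x : ℝ => Real.exp (x ^ 2 / 2))
      (Real.exp (x ^ 2 / 2) * x) x := by
    have := ((hasDerivAt_pow 2 x).div_const 2).exp
    convert this using 1
    norm_num
  have h2 : HasDerivAt (fun x : ℝ => 1 / x + 2 / x ^ 2) (-1 / x ^ 2 - 4 / x ^ 3) x := by
    have := ((hasDerivAt_const x (1:ℝ)).div (hasDerivAt_id x) hx.ne').add
      ((hasDerivAt_const x (2:ℝ)).div (hasDerivAt_pow 2 x) (pow_ne_zero 2 hx.ne'))
    refine HasDerivAt.congr_deriv this ?_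
    simp only [id, Nat.cast_ofNat]
    field_simp
    norm_num
    ring
  have h3 := intervalIntegral.integral_hasDerivAt_right
    (continuous_exp_sq_half.intervalIntegrable 0 x)
    (continuous_exp_sq_half.stronglyMeasurableAtFilter _ _) continuous_exp_sq_half.continuousAt
  refine ((h1.mul h2).sub h3).congr_deriv ?_
  field_simp
  ring

lemma integral_exp_sq_half_le {x : ℝ} (hx : 0 < x) :
    ∫ y in (0:ℝ)..x, Real.exp (y ^ 2 / 2)
      ≤ Real.exp (x ^ 2 / 2) * (1 / x + 2 / x ^ 2) + Real.exp 2 := by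
  rcases le_total x 2 with h | h
  · have := integral_exp_sq_half_le_exp_two hx.le h
    have : 0 ≤ Real.exp (x ^ 2 / 2) * (1 / x + 2 / x ^ 2) := by positivity
    linarith
  · have hmono : MonotoneOn (fun x : ℝ => Real.exp (x ^ 2 / 2) * (1 / x + 2 / x ^ 2)
        - ∫ y in (0:ℝ)..x, Real.exp (y ^ 2 / 2)) (Set.Ici 2) := by
      have hd : ∀ z ∈ Set.Ici (2:ℝ), _ := fun z hz =>
        hasDerivAt_majorant_sub_integral (lt_of_lt_of_le two_pos hz)
      apply monotoneOn_of_hasDerivWithinAt_nonneg (convex_Ici 2)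
        (fun z hz => (hd z hz).continuousAt.continuousWithinAt)
        (fun z hz => (hd z (interior_subset hz)).hasDerivWithinAt)
      intro z hz
      have hz' : (2:ℝ) ≤ z := interior_subset hz
      have : 0 ≤ 2 * z ^ 2 - z - 4 := by nlinarith
      positivity
    have h2 := hmono Set.self_mem_Ici h h
    have h3 := integral_exp_sq_half_le_exp_two zero_le_two le_rfl
    have h4 : 0 ≤ Real.exp ((2:ℝ) ^ 2 / 2) * (1 / 2 + 2 / 2 ^ 2) := by positivity
    simp only at h2
    linarith

lemma H_lower_bound_of_pos {x : ℝ} (hx : 0 < x) :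
    -2 / x - x * Real.exp (2 - x ^ 2 / 2)
      ≤ 1 - x * Real.exp (-x ^ 2 / 2) * ∫ y in (0:ℝ)..x, Real.exp (y ^ 2 / 2) := by
  have h := mul_le_mul_of_nonneg_left (integral_exp_sq_half_le hx)
    (by positivity : 0 ≤ x * Real.exp (-x ^ 2 / 2))
  have e1 : Real.exp (-x ^ 2 / 2) * Real.exp (x ^ 2 / 2) = 1 := by
    rw [← Real.exp_add, ← Real.exp_zero]; congr 1; ring
  have e2 : Real.exp (2 - x ^ 2 / 2) = Real.exp (-x ^ 2 / 2) * Real.exp 2 := by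
    rw [← Real.exp_add]; congr 1; ring
  have e3 : x * Real.exp (-x ^ 2 / 2) *
      (Real.exp (x ^ 2 / 2) * (1 / x + 2 / x ^ 2) + Real.exp 2)
      = 1 + 2 / x + x * Real.exp (2 - x ^ 2 / 2) := by
    have e4 : x * (1 / x + 2 / x ^ 2) = 1 + 2 / x := by field_simp
    rw [e2]
    linear_combination (x * (1 / x + 2 / x ^ 2)) * e1 + e4
  rw [e3] at h
  have : -2 / x = -(2 / x) := by ring
  linarith

/-- **Lower bound for `H` outside the unit interval.**
For `|x| ≥ 1` one has
`H(x) := 1 - x e^{-x²/2} ∫_0^x e^{y²/2} dy ≥ -2/|x| - |x| e^{2 - x²/2}`. -/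
theorem H_lower_bound (x : ℝ) (hx : 1 ≤ |x|) :
    -2 / |x| - |x| * Real.exp (2 - x ^ 2 / 2)
      ≤ 1 - x * Real.exp (-x ^ 2 / 2) * ∫ y in (0:ℝ)..x, Real.exp (y ^ 2 / 2) := by
  have h := H_lower_bound_of_pos (lt_of_lt_of_le one_pos hx)
  rcases abs_choice x with hc | hc
  · rwa [hc] at h ⊢
  · rw [hc] at h ⊢
    have hodd : ∫ y in (0:ℝ)..(-x), Real.exp (y ^ 2 / 2)
        = -∫ y in (0:ℝ)..x, Real.exp (y ^ 2 / 2) := by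
      have := intervalIntegral.integral_comp_neg (a := 0) (b := x)
        (fun y : ℝ => Real.exp (y ^ 2 / 2))
      simp only [neg_sq, neg_zero] at this
      rw [this, intervalIntegral.integral_symm]
    rw [hodd, neg_sq] at h
    linarith
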